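/- arXiv:math/0703628 — 12 statements merged into one kernel-verified Lean document; each statement's English description precedes it below -/
import Mathlib

section
/- Let G be a group, E a real Banach space, and f : G → E a function such that ‖f(xy) + f(xy⁻¹) − 2f(x)‖ ≤ c for all x, y ∈ G, where c > 0. Then for every x ∈ G and every natural number m ≥ 1, ‖f(x^m) − m·f(x)‖ ≤ c_m, where the constants c_m are defined by c₁ = c + 2‖f(1)‖, c₂ = c + ‖f(1)‖, c₃ = c + c₁, and c_m = c + c₁ + c_{m−2} for m > 3. -/
/-!
Taking `x = 1` in the inequality shows that `f` is odd up to `c + 2‖f 1‖`. Taking `(x, x ^ (n + 1))`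
compares `f (x ^ (n + 2))` with `2 f x - f ((x ^ n)⁻¹)`, so approximate oddness bounds
`f (x ^ (n + 2)) - 2 f x - f (x ^ n)` by `c + (c + 2‖f 1‖)`. The bound on `f (x ^ m) - m f x`
then follows by induction in steps of two; the recursion for `C` adds up these errors.
-/

theorem quasiJensen_odd {G : Type*} [Group G] {E : Type*} [NormedAddCommGroup E]
    [NormedSpace ℝ E] {f : G → E} {c : ℝ}
    (hf : ∀ x y : G, ‖f (x * y) + f (x * y⁻¹) - (2 : ℝ) • f x‖ ≤ c) (y : G) :
    ‖f y + f y⁻¹‖ ≤ c + 2 * ‖f 1‖ := by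
  have h := hf 1 y
  rw [one_mul, one_mul] at h
  calc ‖f y + f y⁻¹‖ = ‖(f y + f y⁻¹ - (2 : ℝ) • f 1) + (2 : ℝ) • f 1‖ := by
        rw [sub_add_cancel]
    _ ≤ ‖f y + f y⁻¹ - (2 : ℝ) • f 1‖ + ‖(2 : ℝ) • f 1‖ := norm_add_le _ _
    _ ≤ c + 2 * ‖f 1‖ := by
        rw [norm_smul, Real.norm_ofNat]
        gcongr

theorem quasiJensen_pow_step {G : Type*} [Group G] {E : Type*} [NormedAddCommGroup E]
    [NormedSpace ℝ E] {f : G → E} {c : ℝ}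
    (hf : ∀ x y : G, ‖f (x * y) + f (x * y⁻¹) - (2 : ℝ) • f x‖ ≤ c) (x : G) (n : ℕ) :
    ‖f (x ^ (n + 2)) - (2 : ℝ) • f x - f (x ^ n)‖ ≤ c + (c + 2 * ‖f 1‖) := by
  have h := hf x (x ^ (n + 1))
  have e1 : x * x ^ (n + 1) = x ^ (n + 2) := (pow_succ' x (n + 1)).symm
  have e2 : x * (x ^ (n + 1))⁻¹ = (x ^ n)⁻¹ := by
    rw [pow_succ, mul_inv_rev, mul_inv_cancel_left]
  rw [e1, e2] at h
  calc ‖f (x ^ (n + 2)) - (2 : ℝ) • f x - f (x ^ n)‖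
      = ‖(f (x ^ (n + 2)) + f (x ^ n)⁻¹ - (2 : ℝ) • f x) - (f (x ^ n) + f (x ^ n)⁻¹)‖ := by
        congr 1; abel
    _ ≤ _ := norm_sub_le _ _
    _ ≤ _ := add_le_add h (quasiJensen_odd hf _)


/-- Lemma 2.3 / `l-1`.  If `f : G → E` satisfies
`‖f(xy) + f(xy⁻¹) − 2f(x)‖ ≤ c` for all `x, y`, then for every `x` and every `m ≥ 1`,
`‖f(x^m) − m·f(x)‖ ≤ c_m` where `c₁ = c + 2‖f 1‖`, `c₂ = c + ‖f 1‖`, `c₃ = c + c₁`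
and `c_m = c + c₁ + c_{m-2}` for `m > 3`. -/
theorem stmt0 {G : Type*} [Group G] {E : Type*} [NormedAddCommGroup E]
    [NormedSpace ℝ E] [CompleteSpace E] (f : G → E) (c : ℝ) (hc : 0 < c)
    (hf : ∀ x y : G, ‖f (x * y) + f (x * y⁻¹) - (2 : ℝ) • f x‖ ≤ c)
    (C : ℕ → ℝ)
    (hC1 : C 1 = c + 2 * ‖f 1‖)
    (hC2 : C 2 = c + ‖f 1‖)
    (hC3 : C 3 = c + C 1)
    (hCrec : ∀ m : ℕ, 3 < m → C m = c + C 1 + C (m - 2)) :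
    ∀ (x : G) (m : ℕ), 1 ≤ m → ‖f (x ^ m) - (m : ℝ) • f x‖ ≤ C m := by
  intro x m
  -- The step inequality turns a bound for `n` into one for `n + 2`.
  have step : ∀ (n : ℕ) (B : ℝ), ‖f (x ^ n) - (n : ℝ) • f x‖ ≤ B →
      ‖f (x ^ (n + 2)) - ((n + 2 : ℕ) : ℝ) • f x‖ ≤ c + C 1 + B := by
    intro n B hB
    calc ‖f (x ^ (n + 2)) - ((n + 2 : ℕ) : ℝ) • f x‖
        = ‖(f (x ^ (n + 2)) - (2 : ℝ) • f x - f (x ^ n)) + (f (x ^ n) - (n : ℝ) • f x)‖ := by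
          congr 1; push_cast; module
      _ ≤ _ := norm_add_le _ _
      _ ≤ _ := by
          rw [hC1]
          exact add_le_add (quasiJensen_pow_step hf x n) hB
  induction m using Nat.strong_induction_on with
  | _ m ih =>
    intro hm
    obtain rfl | rfl | rfl | h4 : m = 1 ∨ m = 2 ∨ m = 3 ∨ 3 < m := by omega
    · simp only [pow_one, Nat.cast_one, one_smul, sub_self, norm_zero, hC1]
      positivity
    · -- The step from `n = 0` would be too lossy; `y = x` gives the sharper constant.
      have h := hf x x
      rw [mul_inv_cancel, ← pow_two] at h
      calc ‖f (x ^ 2) - ((2 : ℕ) : ℝ) • f x‖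
          = ‖(f (x ^ 2) + f 1 - (2 : ℝ) • f x) - f 1‖ := by
            congr 1; push_cast; abel
        _ ≤ _ := norm_sub_le _ _
        _ ≤ _ := by rw [hC2]; gcongr
    · -- The bound for `m = 1` is exact, so only the error of one step enters `C 3`.
      have h := step 1 0 (by simp)
      rwa [add_zero, ← hC3] at h
    · obtain ⟨n, rfl⟩ : ∃ n, m = n + 2 := ⟨m - 2, by omega⟩
      rw [hCrec _ h4, Nat.add_sub_cancel]
      exact step n _ (ih n (by omega) (by omega))
end

section
/- Let G be a group, E a real Banach space, and f : G → E a function such that ‖f(xy) + f(xy⁻¹) − 2f(x)‖ ≤ c for all x, y ∈ G, where c > 0. Then for every integer m > 1 and every x ∈ G, the sequence k ↦ (1/m^k)·f(x^{m^k}) is a Cauchy sequence in E; hence it converges to a limit φ_m(x), and this limit satisfies ‖φ_m(x) − f(x)‖ ≤ c_m for all x ∈ G. -/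
/-!
The pair `(x, x ^ (m - 1))` turns the quasi-Jensen inequality into a comparison of `f (x ^ m)`
with `2 f(x) - f(x ^ (-(m - 2)))`, and the pair `(1, y)` shows that `f` is odd up to the error
`c + 2 ‖f 1‖ = c₁`. Hence `f (x ^ m)` is within `c + c₁` of `f (x ^ (m - 2)) + 2 f(x)`, and
induction in steps of two gives `‖f (x ^ m) - m f(x)‖ ≤ c_m` (`norm_pow_sub_smul_le`). Applying
this at `x ^ m ^ k`, consecutive terms of the sequence differ by at most
`c_m / m ^ (k + 1) ≤ (c_m / 2) / 2 ^ k`, which yields both the Cauchy property and the bound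
`c_m` on the distance from the zeroth term `f x` to the limit (Hyers' direct method).
-/

open Filter

/-- A quasi-Jensen function is odd up to a bounded error. -/
lemma norm_inv_add_le {G : Type*} [Group G] {E : Type*} [NormedAddCommGroup E]
    [NormedSpace ℝ E] (f : G → E) (c : ℝ)
    (hf : ∀ x y : G, ‖f (x * y) + f (x * y⁻¹) - (2 : ℝ) • f x‖ ≤ c) (y : G) :
    ‖f y + f y⁻¹‖ ≤ c + 2 * ‖f 1‖ := by
  have h := hf 1 y
  rw [one_mul, one_mul] at h
  calc ‖f y + f y⁻¹‖ = ‖(f y + f y⁻¹ - (2 : ℝ) • f 1) + (2 : ℝ) • f 1‖ := by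
        rw [sub_add_cancel]
    _ ≤ c + 2 * ‖f 1‖ := by
        refine (norm_add_le _ _).trans (add_le_add h ?_)
        rw [norm_smul, Real.norm_ofNat]

lemma norm_pow_add_two_sub_le {G : Type*} [Group G] {E : Type*} [NormedAddCommGroup E]
    [NormedSpace ℝ E] (f : G → E) (c : ℝ)
    (hf : ∀ x y : G, ‖f (x * y) + f (x * y⁻¹) - (2 : ℝ) • f x‖ ≤ c) (n : ℕ) (x : G) :
    ‖f (x ^ (n + 2)) - f (x ^ n) - (2 : ℝ) • f x‖ ≤ c + (c + 2 * ‖f 1‖) := by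
  have h := hf x (x ^ (n + 1))
  rw [← pow_succ', show x * (x ^ (n + 1))⁻¹ = (x ^ n)⁻¹ by group] at h
  calc ‖f (x ^ (n + 2)) - f (x ^ n) - (2 : ℝ) • f x‖
      = ‖(f (x ^ (n + 2)) + f (x ^ n)⁻¹ - (2 : ℝ) • f x) - (f (x ^ n) + f (x ^ n)⁻¹)‖ := by
        congr 1; abel
    _ ≤ c + (c + 2 * ‖f 1‖) :=
        (norm_sub_le _ _).trans (add_le_add h (norm_inv_add_le f c hf _))

/-- The key estimate: `f` is homogeneous along powers up to the error `c_m`. -/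
lemma norm_pow_sub_smul_le {G : Type*} [Group G] {E : Type*} [NormedAddCommGroup E]
    [NormedSpace ℝ E] (f : G → E) (c : ℝ)
    (hf : ∀ x y : G, ‖f (x * y) + f (x * y⁻¹) - (2 : ℝ) • f x‖ ≤ c)
    (C : ℕ → ℝ)
    (hC1 : C 1 = c + 2 * ‖f 1‖)
    (hC2 : C 2 = c + ‖f 1‖)
    (hC3 : C 3 = c + C 1)
    (hCrec : ∀ m : ℕ, 3 < m → C m = c + C 1 + C (m - 2)) (x : G) :
    ∀ m : ℕ, 1 < m → ‖f (x ^ m) - (m : ℝ) • f x‖ ≤ C m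
  | 0, h => by omega
  | 1, h => by omega
  | 2, _ => by
    have h := hf x x
    rw [mul_inv_cancel, ← pow_two] at h
    calc ‖f (x ^ 2) - ((2 : ℕ) : ℝ) • f x‖
        = ‖(f (x ^ 2) + f 1 - (2 : ℝ) • f x) - f 1‖ := by
          congr 1; push_cast; abel
      _ ≤ C 2 := by
          rw [hC2]
          exact (norm_sub_le _ _).trans (add_le_add h le_rfl)
  | 3, _ => by
    have h := norm_pow_add_two_sub_le f c hf 1 x
    rw [pow_one] at h
    rw [hC3, hC1]
    convert h using 2
    push_cast
    module
  | n + 4, _ => by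
    have h := norm_pow_add_two_sub_le f c hf (n + 2) x
    have ih := norm_pow_sub_smul_le f c hf C hC1 hC2 hC3 hCrec x (n + 2) (by omega)
    rw [hCrec (n + 4) (by omega), show n + 4 - 2 = n + 2 by omega, hC1]
    calc ‖f (x ^ (n + 4)) - ((n + 4 : ℕ) : ℝ) • f x‖
        = ‖(f (x ^ (n + 2 + 2)) - f (x ^ (n + 2)) - (2 : ℝ) • f x)
            + (f (x ^ (n + 2)) - ((n + 2 : ℕ) : ℝ) • f x)‖ := by
          congr 1; push_cast; module
      _ ≤ _ := (norm_add_le _ _).trans (add_le_add h ih)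

/-- If `f : G → E` satisfies `‖f(xy) + f(xy⁻¹) − 2f(x)‖ ≤ c`
for all `x, y` (with `E` a real Banach space), then for every integer `m > 1` and
every `x` the sequence `k ↦ (1/m^k)·f(x^{m^k})` is Cauchy, hence converges to a
limit `φ_m(x)`, and this limit satisfies `‖φ_m(x) − f(x)‖ ≤ c_m`. -/
theorem stmt2 {G : Type*} [Group G] {E : Type*} [NormedAddCommGroup E]
    [NormedSpace ℝ E] [CompleteSpace E] (f : G → E) (c : ℝ) (hc : 0 < c)
    (hf : ∀ x y : G, ‖f (x * y) + f (x * y⁻¹) - (2 : ℝ) • f x‖ ≤ c)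
    (C : ℕ → ℝ)
    (hC1 : C 1 = c + 2 * ‖f 1‖)
    (hC2 : C 2 = c + ‖f 1‖)
    (hC3 : C 3 = c + C 1)
    (hCrec : ∀ m : ℕ, 3 < m → C m = c + C 1 + C (m - 2)) :
    ∀ (m : ℕ), 1 < m → ∀ x : G,
      CauchySeq (fun k : ℕ => (1 / (m : ℝ) ^ k) • f (x ^ m ^ k)) ∧
      ∃ L : E, Tendsto (fun k : ℕ => (1 / (m : ℝ) ^ k) • f (x ^ m ^ k)) atTop (nhds L) ∧
        ‖L - f x‖ ≤ C m := by
  intro m hm x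
  have key := norm_pow_sub_smul_le f c hf C hC1 hC2 hC3 hCrec
  have hCm : 0 ≤ C m := (norm_nonneg _).trans (key x m hm)
  have hm2 : (2 : ℝ) ≤ m := by exact_mod_cast hm
  have hm0 : (m : ℝ) ≠ 0 := by positivity
  set a : ℕ → E := fun k => (1 / (m : ℝ) ^ k) • f (x ^ m ^ k) with ha
  -- Ratio `1 / 2` suffices for every `m`: the series then sums to exactly `C m`.
  have hdist : ∀ k, dist (a k) (a (k + 1)) ≤ C m / 2 / 2 ^ k := by
    intro k
    have h := key (x ^ m ^ k) m hm
    rw [← pow_mul, ← pow_succ] at h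
    have hdiff : a (k + 1) - a k
        = (1 / (m : ℝ) ^ (k + 1)) • (f (x ^ m ^ (k + 1)) - (m : ℝ) • f (x ^ m ^ k)) := by
      simp only [ha, smul_sub, smul_smul]
      congr 2
      field_simp
      ring
    rw [dist_comm, dist_eq_norm, hdiff, norm_smul, Real.norm_of_nonneg (by positivity)]
    calc 1 / (m : ℝ) ^ (k + 1) * ‖f (x ^ m ^ (k + 1)) - (m : ℝ) • f (x ^ m ^ k)‖
        ≤ 1 / (2 : ℝ) ^ (k + 1) * C m := by gcongr
      _ = C m / 2 / 2 ^ k := by field_simp; ring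
  have hcauchy : CauchySeq a := cauchySeq_of_le_geometric_two hdist
  obtain ⟨L, hL⟩ := cauchySeq_tendsto_of_complete hcauchy
  refine ⟨hcauchy, L, hL, ?_⟩
  have h0 := dist_le_of_le_geometric_two_of_tendsto₀ hdist hL
  rwa [dist_comm, dist_eq_norm, show a 0 = f x by simp [ha]] at h0
end

section
/- Let G be a group, E a real Banach space, and f : G → E a function such that ‖f(xy) + f(xy⁻¹) − 2f(x)‖ ≤ c for all x, y ∈ G, where c > 0. For an integer m > 1, let φ_m(x) = lim_{k→∞} (1/m^k)·f(x^{m^k}). Then φ_m is quasi-Jensen; in fact ‖φ_m(xy) + φ_m(xy⁻¹) − 2φ_m(x)‖ ≤ 4c_m + c for all x, y ∈ G. -/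
/-! The map `f` is almost homogeneous on powers: `‖f (x ^ m) - m • f x‖ ≤ C m`. The substitution
`(x, y) ↦ (x, x ^ (m - 1))` relates `f (x ^ m)` to `f ((x ^ (m - 2))⁻¹)`, and `f` is odd up to the
bound `C 1`, so this follows by induction in steps of two. Iterating along `x, x ^ m, x ^ m ^ 2, …`
gives `‖f (x ^ m ^ k) - m ^ k • f x‖ ≤ C m * (m ^ k - 1)`; dividing by `m ^ k` and passing to the
limit, `φ` stays within `C m` of `f`. Replacing `f` by `φ` in the quasi-Jensen inequality
therefore costs at most `(1 + 1 + 2) * C m`. -/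

open Filter

section

variable {G : Type*} [Group G] {E : Type*} [NormedAddCommGroup E] [NormedSpace ℝ E]
  {f : G → E} {c : ℝ}

/-- A quasi-Jensen map is odd up to a bounded error. -/
lemma norm_add_inv_le (hf : ∀ x y : G, ‖f (x * y) + f (x * y⁻¹) - (2 : ℝ) • f x‖ ≤ c) (y : G) :
    ‖f y + f y⁻¹‖ ≤ c + 2 * ‖f 1‖ := by
  have h := hf 1 y
  simp only [one_mul] at h
  calc ‖f y + f y⁻¹‖ = ‖(f y + f y⁻¹ - (2 : ℝ) • f 1) + (2 : ℝ) • f 1‖ := by congr 1; abel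
    _ ≤ ‖f y + f y⁻¹ - (2 : ℝ) • f 1‖ + ‖(2 : ℝ) • f 1‖ := norm_add_le _ _
    _ ≤ c + 2 * ‖f 1‖ := by
      rw [norm_smul]
      norm_num
      exact h

lemma norm_pow_sub_le (hf : ∀ x y : G, ‖f (x * y) + f (x * y⁻¹) - (2 : ℝ) • f x‖ ≤ c)
    (C : ℕ → ℝ) (hC1 : C 1 = c + 2 * ‖f 1‖) (hC2 : C 2 = c + ‖f 1‖) (hC3 : C 3 = c + C 1)
    (hCrec : ∀ m : ℕ, 3 < m → C m = c + C 1 + C (m - 2)) (x : G) (m : ℕ) (hm : 1 < m) :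
    ‖f (x ^ m) - (m : ℝ) • f x‖ ≤ C m := by
  have step (n : ℕ) (B : ℝ) (hB : ‖f (x ^ n) - (n : ℝ) • f x‖ ≤ B) :
      ‖f (x ^ (n + 2)) - ((n + 2 : ℕ) : ℝ) • f x‖ ≤ c + C 1 + B := by
    have h := hf x (x ^ (n + 1))
    have e1 : x * x ^ (n + 1) = x ^ (n + 2) := by group
    have e2 : x * (x ^ (n + 1))⁻¹ = (x ^ n)⁻¹ := by
      rw [pow_succ]
      group
    rw [e1, e2] at h
    have h' := norm_add_inv_le hf (x ^ n)
    rw [← hC1] at h'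
    calc ‖f (x ^ (n + 2)) - ((n + 2 : ℕ) : ℝ) • f x‖
        = ‖(f (x ^ (n + 2)) + f (x ^ n)⁻¹ - (2 : ℝ) • f x) - (f (x ^ n) + f (x ^ n)⁻¹)
            + (f (x ^ n) - (n : ℝ) • f x)‖ := by
          congr 1
          push_cast
          module
      _ ≤ _ := (norm_add_le _ _).trans (add_le_add ((norm_sub_le _ _).trans (add_le_add h h')) hB)
  induction m using Nat.strong_induction_on with
  | _ m ih =>
    obtain rfl | rfl | h3 : m = 2 ∨ m = 3 ∨ 3 < m := by omega
    · -- Here `step` would be wasteful, since its term `f ((x ^ 0)⁻¹)` is just `f 1`.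
      have h := hf x x
      rw [mul_inv_cancel, ← pow_two] at h
      rw [hC2]
      calc ‖f (x ^ 2) - ((2 : ℕ) : ℝ) • f x‖
          = ‖(f (x ^ 2) + f 1 - (2 : ℝ) • f x) - f 1‖ := by
            congr 1
            push_cast
            abel
        _ ≤ _ := (norm_sub_le _ _).trans (by gcongr)
    · simpa [hC3] using step 1 0 (by simp)
    · obtain ⟨n, rfl⟩ : ∃ n, m = n + 2 := ⟨m - 2, by omega⟩
      rw [hCrec _ h3]
      exact step n _ (ih n (by omega) (by omega))

/-- The slack `- 1` on the right is what makes the induction on `k` close, using `2 ≤ m`. -/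
lemma norm_pow_pow_sub_le {B : ℝ} {m : ℕ} (hm : 1 < m)
    (hB : ∀ x : G, ‖f (x ^ m) - (m : ℝ) • f x‖ ≤ B) (x : G) (k : ℕ) :
    ‖f (x ^ m ^ k) - ((m : ℝ) ^ k) • f x‖ ≤ B * ((m : ℝ) ^ k - 1) := by
  have hB0 : 0 ≤ B := (norm_nonneg _).trans (hB x)
  have hm2 : (2 : ℝ) ≤ m := by exact_mod_cast hm
  induction k with
  | zero => simp
  | succ k ih =>
    have h := hB (x ^ m ^ k)
    rw [← pow_mul, ← pow_succ] at h
    calc ‖f (x ^ m ^ (k + 1)) - ((m : ℝ) ^ (k + 1)) • f x‖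
        = ‖(f (x ^ m ^ (k + 1)) - (m : ℝ) • f (x ^ m ^ k))
            + (m : ℝ) • (f (x ^ m ^ k) - ((m : ℝ) ^ k) • f x)‖ := by
          congr 1
          module
      _ ≤ B + m * (B * ((m : ℝ) ^ k - 1)) := by
          refine (norm_add_le _ _).trans (add_le_add h ?_)
          rw [norm_smul, Real.norm_natCast]
          gcongr
      _ ≤ B * ((m : ℝ) ^ (k + 1) - 1) := by
          rw [pow_succ]
          nlinarith [mul_nonneg hB0 (sub_nonneg.2 hm2)]

lemma norm_limit_sub_le {B : ℝ} {m : ℕ} (hm : 1 < m)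
    (hB : ∀ x : G, ‖f (x ^ m) - (m : ℝ) • f x‖ ≤ B) (x : G) {l : E}
    (hl : Tendsto (fun k : ℕ => (1 / (m : ℝ) ^ k) • f (x ^ m ^ k)) atTop (nhds l)) :
    ‖l - f x‖ ≤ B := by
  refine le_of_tendsto (hl.sub_const (f x)).norm (Eventually.of_forall fun k => ?_)
  have hB0 : 0 ≤ B := (norm_nonneg _).trans (hB x)
  have hpos : (0 : ℝ) < (m : ℝ) ^ k := by positivity
  have e : (1 / (m : ℝ) ^ k) • f (x ^ m ^ k) - f x
      = (1 / (m : ℝ) ^ k) • (f (x ^ m ^ k) - ((m : ℝ) ^ k) • f x) := by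
    rw [smul_sub, smul_smul, one_div_mul_cancel hpos.ne', one_smul]
  rw [e, norm_smul, Real.norm_of_nonneg (by positivity), one_div_mul_eq_div, div_le_iff₀ hpos]
  linarith [norm_pow_pow_sub_le hm hB x k]

end

/-- Lemma 2.5 / `l-3`.  Let `f : G → E` satisfy
`‖f(xy) + f(xy⁻¹) − 2f(x)‖ ≤ c` for all `x, y`.  For an integer `m > 1` let
`φ_m(x) = lim_{k→∞} (1/m^k)·f(x^{m^k})`.  Then `φ_m` is quasi-Jensen; in fact
`‖φ_m(xy) + φ_m(xy⁻¹) − 2φ_m(x)‖ ≤ 4c_m + c` for all `x, y`. -/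
theorem stmt3 {G : Type*} [Group G] {E : Type*} [NormedAddCommGroup E]
    [NormedSpace ℝ E] [CompleteSpace E] (f : G → E) (c : ℝ) (hc : 0 < c)
    (hf : ∀ x y : G, ‖f (x * y) + f (x * y⁻¹) - (2 : ℝ) • f x‖ ≤ c)
    (C : ℕ → ℝ)
    (hC1 : C 1 = c + 2 * ‖f 1‖)
    (hC2 : C 2 = c + ‖f 1‖)
    (hC3 : C 3 = c + C 1)
    (hCrec : ∀ m : ℕ, 3 < m → C m = c + C 1 + C (m - 2))
    (m : ℕ) (hm : 1 < m) (φ : G → E)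
    (hφ : ∀ x : G,
      Tendsto (fun k : ℕ => (1 / (m : ℝ) ^ k) • f (x ^ m ^ k)) atTop (nhds (φ x))) :
    ∀ x y : G, ‖φ (x * y) + φ (x * y⁻¹) - (2 : ℝ) • φ x‖ ≤ 4 * C m + c := by
  intro x y
  have key (z : G) : ‖φ z - f z‖ ≤ C m :=
    norm_limit_sub_le hm (fun x => norm_pow_sub_le hf C hC1 hC2 hC3 hCrec x m hm) z (hφ z)
  have h2 : ‖(2 : ℝ) • (φ x - f x)‖ ≤ 2 * C m := by
    rw [norm_smul, Real.norm_of_nonneg zero_le_two]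
    linarith [key x]
  calc ‖φ (x * y) + φ (x * y⁻¹) - (2 : ℝ) • φ x‖
      = ‖(φ (x * y) - f (x * y)) + (φ (x * y⁻¹) - f (x * y⁻¹)) - (2 : ℝ) • (φ x - f x)
          + (f (x * y) + f (x * y⁻¹) - (2 : ℝ) • f x)‖ := by
        congr 1
        module
    _ ≤ C m + C m + 2 * C m + c :=
        norm_add_le_of_le (norm_sub_le_of_le (norm_add_le_of_le (key _) (key _)) h2) (hf x y)
    _ = 4 * C m + c := by ring
end

section
/- Let G be a group, E a real Banach space, and f : G → E a quasi-Jensen function (i.e., ‖f(xy) + f(xy⁻¹) − 2f(x)‖ ≤ c for all x, y ∈ G, for some c > 0). For each integer m ≥ 2 define φ_m(x) = lim_{k→∞} (1/m^k)·f(x^{m^k}). Then φ₂ = φ_m for every m ≥ 2. -/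
/-!
Along the powers of a fixed `x`, a quasi-Jensen function is almost additive: the Jensen inequality
at `(x ^ (p + q), x ^ (p - q))` compares `f (x ^ (2 * p)) + f (x ^ (2 * q))` with
`2 f (x ^ (p + q))`, and at `(x ^ p, x ^ p)` it compares `f (x ^ (2 * p))` with `2 f (x ^ p)`.
For an almost additive sequence `a`, computing `a (m * n)` in two ways shows
`‖a m / m - a n / n‖ ≤ C (1 / m + 1 / n)`, so `a n / n` has the same limit along `2 ^ k` and along
`m ^ k`.
-/

lemma norm_map_mul_sub_le {E : Type*} [NormedAddCommGroup E] [NormedSpace ℝ E] (a : ℕ → E) (C : ℝ)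
    (h : ∀ p q, ‖a p + a q - a (p + q)‖ ≤ C) (n m : ℕ) (hm : 1 ≤ m) :
    ‖a (m * n) - (m : ℝ) • a n‖ ≤ m * C := by
  induction m, hm using Nat.le_induction with
  | base => simpa using (norm_nonneg _).trans (h 0 0)
  | succ m _ ih =>
    have e : a ((m + 1) * n) - ((m + 1 : ℕ) : ℝ) • a n
        = (a (m * n) - (m : ℝ) • a n) - (a (m * n) + a n - a (m * n + n)) := by
      rw [add_one_mul]; push_cast; module
    rw [e]
    have := norm_sub_le (a (m * n) - (m : ℝ) • a n) (a (m * n) + a n - a (m * n + n))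
    have := h (m * n) n
    push_cast
    linarith

lemma norm_div_sub_div_le {E : Type*} [NormedAddCommGroup E] [NormedSpace ℝ E] (a : ℕ → E) (C : ℝ)
    (h : ∀ p q, ‖a p + a q - a (p + q)‖ ≤ C) (m n : ℕ) (hm : 1 ≤ m) (hn : 1 ≤ n) :
    ‖(1 / (m : ℝ)) • a m - (1 / (n : ℝ)) • a n‖ ≤ C * (1 / (m : ℝ) + 1 / (n : ℝ)) := by
  have hm' : (0 : ℝ) < m := by exact_mod_cast hm
  have hn' : (0 : ℝ) < n := by exact_mod_cast hn
  have h1 := norm_map_mul_sub_le a C h n m hm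
  have h2 := norm_map_mul_sub_le a C h m n hn
  rw [mul_comm n m] at h2
  have e : (1 / (m : ℝ)) • a m - (1 / (n : ℝ)) • a n = (1 / ((m : ℝ) * n)) •
      ((a (m * n) - (m : ℝ) • a n) - (a (m * n) - (n : ℝ) • a m)) := by
    match_scalars <;> field_simp; ring
  rw [e, norm_smul, Real.norm_of_nonneg (by positivity)]
  calc _ ≤ 1 / ((m : ℝ) * n) * (m * C + n * C) := by
        gcongr; exact (norm_sub_le _ _).trans (add_le_add h1 h2)
    _ = _ := by field_simp; ring

lemma quasiJensen_almost_additive_pow {G : Type*} [Group G] {E : Type*} [NormedAddCommGroup E]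
    [NormedSpace ℝ E] (f : G → E) (c : ℝ)
    (hf : ∀ x y : G, ‖f (x * y) + f (x * y⁻¹) - (2 : ℝ) • f x‖ ≤ c) (x : G) (p q : ℕ) :
    ‖f (x ^ p) + f (x ^ q) - f (x ^ (p + q))‖ ≤ (3 * c + 2 * ‖f 1‖) / 2 := by
  have hd (r : ℕ) : ‖f (x ^ (2 * r)) + f 1 - (2 : ℝ) • f (x ^ r)‖ ≤ c := by
    have := hf (x ^ r) (x ^ r)
    rwa [mul_inv_cancel, ← pow_add, ← two_mul] at this
  have hs : ‖f (x ^ (2 * p)) + f (x ^ (2 * q)) - (2 : ℝ) • f (x ^ (p + q))‖ ≤ c := by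
    have := hf (x ^ (p + q)) (x ^ ((p : ℤ) - q))
    have e1 : x ^ (p + q) * x ^ ((p : ℤ) - q) = x ^ (2 * p) := by
      rw [← zpow_natCast, ← zpow_natCast, ← zpow_add]; congr 1; push_cast; ring
    have e2 : x ^ (p + q) * (x ^ ((p : ℤ) - q))⁻¹ = x ^ (2 * q) := by
      rw [← zpow_natCast, ← zpow_natCast, ← zpow_neg, ← zpow_add]; congr 1; push_cast; ring
    rwa [e1, e2] at this
  have e : (2 : ℝ) • (f (x ^ p) + f (x ^ q) - f (x ^ (p + q)))
      = (f (x ^ (2 * p)) + f (x ^ (2 * q)) - (2 : ℝ) • f (x ^ (p + q)))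
        - (f (x ^ (2 * p)) + f 1 - (2 : ℝ) • f (x ^ p))
        - (f (x ^ (2 * q)) + f 1 - (2 : ℝ) • f (x ^ q)) + (2 : ℝ) • f 1 := by
    module
  have hn := congrArg norm e
  rw [norm_smul, Real.norm_of_nonneg (by norm_num)] at hn
  have h2 : ‖(2 : ℝ) • f 1‖ = 2 * ‖f 1‖ := by
    rw [norm_smul, Real.norm_of_nonneg (by norm_num)]
  have := norm_add_le_of_le (norm_sub_le_of_le (norm_sub_le_of_le hs (hd p)) (hd q)) h2.le
  linarith

open Filter

/-- Lemma 2.6 / `l-4`.  Let `f : G → E` be quasi-Jensen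
(`‖f(xy) + f(xy⁻¹) − 2f(x)‖ ≤ c` for all `x, y`, for some `c > 0`).  For each
integer `m ≥ 2` let `φ_m(x) = lim_{k→∞} (1/m^k)·f(x^{m^k})`.  Then `φ₂ = φ_m`
for every `m ≥ 2`. -/
theorem stmt4 {G : Type*} [Group G] {E : Type*} [NormedAddCommGroup E]
    [NormedSpace ℝ E] [CompleteSpace E] (f : G → E) (c : ℝ) (hc : 0 < c)
    (hf : ∀ x y : G, ‖f (x * y) + f (x * y⁻¹) - (2 : ℝ) • f x‖ ≤ c)
    (φ : ℕ → G → E)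
    (hφ : ∀ m : ℕ, 2 ≤ m → ∀ x : G,
      Tendsto (fun k : ℕ => (1 / (m : ℝ) ^ k) • f (x ^ m ^ k)) atTop (nhds (φ m x))) :
    ∀ m : ℕ, 2 ≤ m → φ 2 = φ m := by
  intro m hm
  funext x
  have key (k : ℕ) := norm_div_sub_div_le (fun n => f (x ^ n)) _
    (quasiJensen_almost_additive_pow f c hf x) (2 ^ k) (m ^ k) Nat.one_le_two_pow
    (Nat.one_le_pow _ _ (by omega))
  have hlim (r : ℕ) (hr : 2 ≤ r) :
      Tendsto (fun k : ℕ => 1 / ((r ^ k : ℕ) : ℝ)) atTop (nhds 0) := by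
    have hr' : (1 : ℝ) < r := by exact_mod_cast hr
    simpa [Function.comp_def] using
      tendsto_inv_atTop_zero.comp (tendsto_pow_atTop_atTop_of_one_lt hr')
  have hb := ((hlim 2 le_rfl).add (hlim m hm)).const_mul ((3 * c + 2 * ‖f 1‖) / 2)
  rw [add_zero, mul_zero] at hb
  have h0 := squeeze_zero_norm key hb
  have h1 := (hφ 2 le_rfl x).sub (hφ m hm x)
  push_cast at h0 h1
  exact sub_eq_zero.mp (tendsto_nhds_unique h1 h0)
end

section
/- Let G be a group, E a real Banach space, and f : G → E a function such that ‖f(xy) + f(xy⁻¹) − 2f(x)‖ ≤ c for all x, y ∈ G, where c > 0. Then the function f̂(x) = lim_{k→∞} (1/2^k)·f(x^{2^k}) is well-defined, is a pseudo-Jensen function (quasi-Jensen and f̂(xⁿ) = n·f̂(x) for all x ∈ G and all integers n), and satisfies ‖f̂(x) − f(x)‖ ≤ c + ‖f(1)‖ for every x ∈ G. -/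
open Filter

/-!
Taking `y = x` in the hypothesis gives `‖f (x ^ 2) - 2 f x‖ ≤ d` with `d = c + ‖f 1‖`, so consecutive
terms of `f (x ^ 2 ^ k) / 2 ^ k` differ by at most `d / 2 / 2 ^ k`. The sequence is therefore Cauchy
and its limit `fhat x` lies within `d` of its first term `f x`; hence `fhat` is again quasi-Jensen,
with constant `c + 4 d`.

For commuting `x` and `y` one has `(x * y) ^ 2 ^ k = x ^ 2 ^ k * y ^ 2 ^ k`, so the defect of
the hypothesis at `x ^ 2 ^ k, y ^ 2 ^ k`, divided by `2 ^ k`, tends to `0`: the Jensen equation holds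
exactly for `fhat` on commuting pairs. Restricted to the powers of a single element, together with
`fhat 1 = 0`, it forces `fhat (x ^ n) = n • fhat x`.
-/

/-- A function on `ℤ` that vanishes at `0` and satisfies the Jensen equation with step `1` is linear. -/
lemma int_jensen_linear {E : Type*} [AddCommGroup E] [Module ℝ E] (g : ℤ → E) (h0 : g 0 = 0)
    (h : ∀ m : ℤ, g (m + 1) + g (m - 1) = (2 : ℝ) • g m) (n : ℤ) : g n = (n : ℝ) • g 1 := by
  -- The recursion has order two, so the induction carries two consecutive values.
  have key : g n = (n : ℝ) • g 1 ∧ g (n + 1) = ((n : ℝ) + 1) • g 1 := by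
    induction n using Int.induction_on with
    | zero => simp [h0]
    | succ i ih =>
      obtain ⟨h1, h2⟩ := ih
      have h3 := h (i + 1)
      rw [add_sub_cancel_right, h1, h2] at h3
      refine ⟨by push_cast at h2 ⊢; exact h2, ?_⟩
      rw [eq_sub_of_add_eq h3]
      push_cast
      module
    | pred i ih =>
      obtain ⟨h1, h2⟩ := ih
      have h3 := h (-i)
      rw [h1, h2] at h3
      constructor
      · rw [eq_sub_of_add_eq' h3]
        push_cast
        module
      · rw [sub_add_cancel, h1]
        push_cast
        module
  exact key.1

/-- Lemma 2.8 / `l-5`.  If `f : G → E` satisfies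
`‖f(xy) + f(xy⁻¹) − 2f(x)‖ ≤ c` for all `x, y`, then
`f̂(x) = lim_{k→∞} (1/2^k)·f(x^{2^k})` is well-defined, is a pseudo-Jensen
function (quasi-Jensen with `f̂(xⁿ) = n·f̂(x)` for all `x` and all integers `n`),
and `‖f̂(x) − f(x)‖ ≤ c + ‖f(1)‖` for every `x`. -/
theorem stmt5 {G : Type*} [Group G] {E : Type*} [NormedAddCommGroup E]
    [NormedSpace ℝ E] [CompleteSpace E] (f : G → E) (c : ℝ) (hc : 0 < c)
    (hf : ∀ x y : G, ‖f (x * y) + f (x * y⁻¹) - (2 : ℝ) • f x‖ ≤ c) :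
    ∃ fhat : G → E,
      (∀ x : G,
        Tendsto (fun k : ℕ => (1 / (2 : ℝ) ^ k) • f (x ^ 2 ^ k)) atTop (nhds (fhat x))) ∧
      (∃ c' > 0, ∀ x y : G,
        ‖fhat (x * y) + fhat (x * y⁻¹) - (2 : ℝ) • fhat x‖ ≤ c') ∧
      (∀ (x : G) (n : ℤ), fhat (x ^ n) = (n : ℝ) • fhat x) ∧
      (∀ x : G, ‖fhat x - f x‖ ≤ c + ‖f 1‖) := by
  set d : ℝ := c + ‖f 1‖ with hd
  have hdouble : ∀ x : G, ‖f (x ^ 2) - (2 : ℝ) • f x‖ ≤ d := fun x => by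
    have h1 := hf x x
    rw [mul_inv_cancel, ← pow_two] at h1
    calc ‖f (x ^ 2) - (2 : ℝ) • f x‖ = ‖(f (x ^ 2) + f 1 - (2 : ℝ) • f x) - f 1‖ := by
          congr 1; abel
      _ ≤ ‖f (x ^ 2) + f 1 - (2 : ℝ) • f x‖ + ‖f 1‖ := norm_sub_le _ _
      _ ≤ d := by linarith
  have hstep : ∀ (x : G) (k : ℕ), dist ((1 / (2 : ℝ) ^ k) • f (x ^ 2 ^ k))
      ((1 / (2 : ℝ) ^ (k + 1)) • f (x ^ 2 ^ (k + 1))) ≤ d / 2 / 2 ^ k := fun x k => by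
    have h1 := hdouble (x ^ 2 ^ k)
    rw [← pow_mul, ← pow_succ] at h1
    have h2 : (1 / (2 : ℝ) ^ (k + 1)) • f (x ^ 2 ^ (k + 1)) - (1 / (2 : ℝ) ^ k) • f (x ^ 2 ^ k)
        = (1 / (2 : ℝ) ^ (k + 1)) • (f (x ^ 2 ^ (k + 1)) - (2 : ℝ) • f (x ^ 2 ^ k)) := by
      rw [smul_sub, smul_smul]
      congr 2
      field_simp
      ring
    rw [dist_comm, dist_eq_norm, h2, norm_smul, Real.norm_of_nonneg (by positivity)]
    calc 1 / (2 : ℝ) ^ (k + 1) * ‖f (x ^ 2 ^ (k + 1)) - (2 : ℝ) • f (x ^ 2 ^ k)‖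
        ≤ 1 / (2 : ℝ) ^ (k + 1) * d := by gcongr
      _ = d / 2 / 2 ^ k := by field_simp; ring
  choose fhat hlim using fun x : G =>
    cauchySeq_tendsto_of_complete (cauchySeq_of_le_geometric_two (hstep x))
  have hnear : ∀ x : G, ‖fhat x - f x‖ ≤ d := fun x => by
    have h1 := dist_le_of_le_geometric_two_of_tendsto₀ (hstep x) (hlim x)
    rw [dist_comm, dist_eq_norm] at h1
    simpa using h1
  have hcomm : ∀ x y : G, Commute x y → fhat (x * y) + fhat (x * y⁻¹) = (2 : ℝ) • fhat x := by
    intro x y hxy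
    have h1 := ((hlim (x * y)).add (hlim (x * y⁻¹))).sub ((hlim x).const_smul (2 : ℝ))
    have h2 : Tendsto (fun k : ℕ => c * (1 / 2 : ℝ) ^ k) atTop (nhds 0) := by
      simpa using (tendsto_pow_atTop_nhds_zero_of_lt_one (r := (1 / 2 : ℝ))
        (by norm_num) (by norm_num)).const_mul c
    refine sub_eq_zero.mp (tendsto_nhds_unique h1 (squeeze_zero_norm (fun k => ?_) h2))
    have h3 := hf (x ^ 2 ^ k) (y ^ 2 ^ k)
    rw [← inv_pow, ← hxy.mul_pow, ← hxy.inv_right.mul_pow] at h3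
    rw [smul_comm (2 : ℝ), ← smul_add, ← smul_sub, norm_smul,
      Real.norm_of_nonneg (by positivity), mul_comm c, one_div_pow]
    gcongr
  have hone : fhat 1 = 0 := by
    have h1 : Tendsto (fun k : ℕ => (1 / 2 : ℝ) ^ k • f 1) atTop (nhds ((0 : ℝ) • f 1)) :=
      (tendsto_pow_atTop_nhds_zero_of_lt_one (by norm_num) (by norm_num)).smul_const _
    have h2 := hlim 1
    simp only [one_pow, ← one_div_pow] at h2
    simpa using tendsto_nhds_unique h2 h1
  refine ⟨fhat, hlim, ⟨c + 4 * d, by positivity, fun x y => ?_⟩, fun x n => ?_, hnear⟩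
  · have h1 := hnear x
    calc ‖fhat (x * y) + fhat (x * y⁻¹) - (2 : ℝ) • fhat x‖
        = ‖(f (x * y) + f (x * y⁻¹) - (2 : ℝ) • f x) + (fhat (x * y) - f (x * y))
            + (fhat (x * y⁻¹) - f (x * y⁻¹)) - (2 : ℝ) • (fhat x - f x)‖ := by
          congr 1; module
      _ ≤ ‖f (x * y) + f (x * y⁻¹) - (2 : ℝ) • f x‖ + ‖fhat (x * y) - f (x * y)‖
            + ‖fhat (x * y⁻¹) - f (x * y⁻¹)‖ + ‖(2 : ℝ) • (fhat x - f x)‖ :=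
          (norm_sub_le _ _).trans (by gcongr; exact norm_add₃_le)
      _ ≤ c + 4 * d := by
          rw [norm_smul, Real.norm_of_nonneg (by norm_num)]
          linarith [hf x y, hnear (x * y), hnear (x * y⁻¹)]
  · have h1 := int_jensen_linear (fun m : ℤ => fhat (x ^ m)) (by simpa using hone)
      (fun m => by
        simpa [zpow_add_one, zpow_sub_one] using
          hcomm (x ^ m) x ((Commute.refl x).zpow_left m)) n
    simpa using h1
end

section
/- Let G be an arbitrary group and E a real Banach space. Every quasi-Jensen function f : G → E can be written uniquely as f = p + b, where p : G → E is a pseudo-Jensen function and b : G → E is a bounded function. That is, the real vector space of quasi-Jensen functions decomposes as the direct sum of the subspace of pseudo-Jensen functions and the subspace of bounded functions. -/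
/-!
The argument is the homogenization of quasimorphisms. Taking `y = x` in the quasi-Jensen
inequality bounds `f (x ^ 2) - 2 • f x`, so `2⁻ⁿ • f (x ^ 2ⁿ)` is Cauchy; its limit `p` satisfies
`p (x ^ 2) = 2 • p x` and stays within bounded distance of `f` (`exists_limit`), hence is itself
quasi-Jensen (`QuasiJensen.of_bounded_sub`). The second-order recurrence along the powers of `x`
bounds `p (x ^ n) - n • p x` uniformly in `x`, for each fixed `n` (`QuasiJensen.pow_bound`).
Replacing `x` by `x ^ 2ᵏ` multiplies this difference by `2ᵏ`, so it must vanish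
(`eq_zero_of_two_homogeneous`). That lemma also shows that a bounded pseudo-Jensen function
is zero, which gives uniqueness.
-/

/-- A function `f : G → E` is quasi-Jensen if there is `c > 0` with
`‖f(xy) + f(xy⁻¹) − 2f(x)‖ ≤ c` for all `x, y ∈ G`. -/
def QuasiJensen {G : Type*} [Group G] {E : Type*} [NormedAddCommGroup E]
    [NormedSpace ℝ E] (f : G → E) : Prop :=
  ∃ c > (0 : ℝ), ∀ x y : G, ‖f (x * y) + f (x * y⁻¹) - (2 : ℝ) • f x‖ ≤ c

/-- A function `f : G → E` is pseudo-Jensen if it is quasi-Jensen and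
`f(xⁿ) = n·f(x)` for all `x ∈ G` and all integers `n`. -/
def PseudoJensen {G : Type*} [Group G] {E : Type*} [NormedAddCommGroup E]
    [NormedSpace ℝ E] (f : G → E) : Prop :=
  QuasiJensen f ∧ ∀ (x : G) (n : ℤ), f (x ^ n) = (n : ℝ) • f x

/-- A function `f : G → E` is bounded if the set of norms of its values is bounded. -/
def BoundedFun {G : Type*} {E : Type*} [NormedAddCommGroup E] (f : G → E) : Prop :=
  ∃ M : ℝ, ∀ x : G, ‖f x‖ ≤ M

section Helpers

variable {G : Type*} [Group G] {E : Type*} [NormedAddCommGroup E] [NormedSpace ℝ E]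

/-- A bounded function with `g (x ^ 2) = 2 • g x` vanishes, since `g (x ^ 2ᵏ) = 2ᵏ • g x`. -/
theorem eq_zero_of_two_homogeneous {g : G → E} (h2 : ∀ x, g (x ^ 2) = (2 : ℝ) • g x)
    (hb : BoundedFun g) (x : G) : g x = 0 := by
  obtain ⟨M, hM⟩ := hb
  have hpow : ∀ k : ℕ, g (x ^ 2 ^ k) = (2 : ℝ) ^ k • g x := by
    intro k
    induction k with
    | zero => simp
    | succ k ih => rw [pow_succ, pow_mul, h2, ih, smul_smul, pow_succ, mul_comm]
  by_contra hne
  have hpos : 0 < ‖g x‖ := norm_pos_iff.mpr hne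
  obtain ⟨k, hk⟩ := pow_unbounded_of_one_lt (M / ‖g x‖) (one_lt_two : (1 : ℝ) < 2)
  have h := hM (x ^ 2 ^ k)
  rw [hpow, norm_smul, norm_pow, Real.norm_ofNat] at h
  rw [div_lt_iff₀ hpos] at hk
  linarith

theorem QuasiJensen.of_bounded_sub {f g : G → E} (hf : QuasiJensen f)
    (hb : BoundedFun (f - g)) : QuasiJensen g := by
  obtain ⟨c, hc, h⟩ := hf
  obtain ⟨M, hM⟩ := hb
  have hM0 : 0 ≤ M := (norm_nonneg _).trans (hM 1)
  refine ⟨c + M + M + 2 * M, by positivity, fun x y => ?_⟩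
  have e : g (x * y) + g (x * y⁻¹) - (2 : ℝ) • g x
      = (f (x * y) + f (x * y⁻¹) - (2 : ℝ) • f x) - (f - g) (x * y) - (f - g) (x * y⁻¹)
        + (2 : ℝ) • (f - g) x := by
    simp only [Pi.sub_apply, smul_sub]; abel
  rw [e]
  refine norm_add_le_of_le (norm_sub_le_of_le (norm_sub_le_of_le (h x y) (hM _)) (hM _)) ?_
  rw [norm_smul, Real.norm_ofNat]
  linarith [hM x]

/-- For fixed `n`, the defect of `n`-homogeneity of a quasi-Jensen function is bounded uniformly
in `x`. -/
theorem QuasiJensen.pow_bound {f : G → E} (hf : QuasiJensen f) (n : ℤ) :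
    BoundedFun fun x : G => f (x ^ n) - (n : ℝ) • f x := by
  obtain ⟨c, hc, h⟩ := hf
  have hnat : ∀ n : ℕ, BoundedFun (fun x : G => f (x ^ n) - (n : ℝ) • f x) ∧
      BoundedFun (fun x : G => f (x ^ (n + 1)) - ((n : ℝ) + 1) • f x) := by
    intro n
    induction n with
    | zero => exact ⟨⟨‖f 1‖, by simp⟩, ⟨0, by simp⟩⟩
    | succ n ih =>
      obtain ⟨⟨A, hA⟩, B, hB⟩ := ih
      refine ⟨⟨B, by simpa using hB⟩, c + 2 * B + A, fun x => ?_⟩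
      -- the quasi-Jensen inequality at the points `x ^ (n + 1)` and `x`
      have h1 := h (x ^ (n + 1)) x
      have e1 : x ^ (n + 1) * x⁻¹ = x ^ n := by rw [pow_succ, mul_inv_cancel_right]
      rw [← pow_succ, e1] at h1
      have e : f (x ^ (n + 1 + 1)) - (((n + 1 : ℕ) : ℝ) + 1) • f x
          = (f (x ^ (n + 1 + 1)) + f (x ^ n) - (2 : ℝ) • f (x ^ (n + 1)))
            + (2 : ℝ) • (f (x ^ (n + 1)) - ((n : ℝ) + 1) • f x)
            - (f (x ^ n) - (n : ℝ) • f x) := by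
        push_cast; module
      simp only [e]
      refine norm_sub_le_of_le (norm_add_le_of_le h1 ?_) (hA x)
      rw [norm_smul, Real.norm_ofNat]
      linarith [hB x]
  obtain ⟨n, rfl | rfl⟩ := n.eq_nat_or_neg
  · simpa using (hnat n).1
  · obtain ⟨A, hA⟩ := (hnat n).1
    refine ⟨c + ‖(2 : ℝ) • f 1‖ + A, fun x => ?_⟩
    -- the quasi-Jensen inequality at `1` and `x ^ n` compares opposite powers
    have h1 := h 1 (x ^ n)
    rw [one_mul, one_mul] at h1
    have e : f (x ^ (-(n : ℤ))) - ((-(n : ℤ) : ℤ) : ℝ) • f x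
        = (f (x ^ n) + f (x ^ n)⁻¹ - (2 : ℝ) • f 1) + (2 : ℝ) • f 1
          - (f (x ^ n) - (n : ℝ) • f x) := by
      rw [zpow_neg, zpow_natCast]; push_cast; module
    simp only [e]
    exact norm_sub_le_of_le (norm_add_le_of_le h1 le_rfl) (hA x)

/-- Any `f` whose defect of `2`-homogeneity is bounded lies at bounded distance from an exactly
`2`-homogeneous function, namely the limit of `2⁻ⁿ • f (x ^ 2ⁿ)`. -/
theorem exists_limit [CompleteSpace E] {f : G → E}
    (hf : BoundedFun fun x : G => f (x ^ 2) - (2 : ℝ) • f x) :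
    ∃ p : G → E, (∀ x, p (x ^ 2) = (2 : ℝ) • p x) ∧ BoundedFun (f - p) := by
  obtain ⟨K, hK⟩ := hf
  let a : G → ℕ → E := fun x n => ((2 : ℝ) ^ n)⁻¹ • f (x ^ 2 ^ n)
  have ha : ∀ x n, dist (a x n) (a x (n + 1)) ≤ K / 2 / 2 ^ n := by
    intro x n
    have e : a x (n + 1) - a x n
        = ((2 : ℝ) ^ (n + 1))⁻¹ • (f ((x ^ 2 ^ n) ^ 2) - (2 : ℝ) • f (x ^ 2 ^ n)) := by
      simp only [a]
      rw [smul_sub, smul_smul, ← pow_mul, ← pow_succ]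
      congr 2
      rw [pow_succ, mul_inv, mul_assoc, inv_mul_cancel₀ two_ne_zero, mul_one]
    rw [dist_comm, dist_eq_norm, e, norm_smul, norm_inv, norm_pow, Real.norm_ofNat]
    calc ((2 : ℝ) ^ (n + 1))⁻¹ * ‖f ((x ^ 2 ^ n) ^ 2) - (2 : ℝ) • f (x ^ 2 ^ n)‖
        ≤ ((2 : ℝ) ^ (n + 1))⁻¹ * K := by gcongr; exact hK _
      _ = K / 2 / 2 ^ n := by rw [pow_succ]; field_simp
  choose p hp using fun x => cauchySeq_tendsto_of_complete (cauchySeq_of_le_geometric_two (ha x))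
  refine ⟨p, fun x => ?_, K, fun x => ?_⟩
  · have h1 := ((hp x).comp (Filter.tendsto_add_atTop_nat 1)).const_smul (2 : ℝ)
    refine tendsto_nhds_unique (hp (x ^ 2)) (h1.congr fun n => ?_)
    simp only [a, Function.comp]
    rw [smul_smul, ← pow_mul, ← pow_succ']
    congr 1
    rw [pow_succ]; field_simp
  · have h := dist_le_of_le_geometric_two_of_tendsto₀ (ha x) (hp x)
    simpa [a, dist_eq_norm] using h

end Helpers

/-- Theorem 2.10: `KJ(G;E) = PJ(G;E) ⊕ B(G;E)`.  Every
quasi-Jensen function `f : G → E` can be written uniquely as `f = p + b` with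
`p` pseudo-Jensen and `b` bounded. -/
theorem stmt7 {G : Type*} [Group G] {E : Type*} [NormedAddCommGroup E]
    [NormedSpace ℝ E] [CompleteSpace E] (f : G → E) (hf : QuasiJensen f) :
    ∃! pb : (G → E) × (G → E),
      PseudoJensen pb.1 ∧ BoundedFun pb.2 ∧ f = pb.1 + pb.2 := by
  have hf2 : BoundedFun fun x : G => f (x ^ 2) - (2 : ℝ) • f x := by
    simpa using hf.pow_bound 2
  obtain ⟨p, hp2, hb⟩ := exists_limit hf2
  have hp : QuasiJensen p := hf.of_bounded_sub hb
  have hpn : ∀ (x : G) (n : ℤ), p (x ^ n) = (n : ℝ) • p x := by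
    intro x n
    refine sub_eq_zero.mp (eq_zero_of_two_homogeneous
      (g := fun x : G => p (x ^ n) - (n : ℝ) • p x) (fun x => ?_) (hp.pow_bound n) x)
    have e : (x ^ 2) ^ n = (x ^ n) ^ 2 := by
      rw [← zpow_natCast, ← zpow_natCast, ← zpow_mul, ← zpow_mul, mul_comm]
    simp only [e, hp2]
    module
  refine ⟨(p, f - p), ⟨⟨hp, hpn⟩, hb, by simp⟩, ?_⟩
  rintro ⟨q, b⟩ ⟨⟨-, hqn⟩, ⟨B, hB⟩, hqb⟩
  obtain ⟨M, hM⟩ := hb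
  -- `q - p = (f - p) - b` is bounded and homogeneous, hence zero
  have hqp : q = p := by
    funext x
    refine sub_eq_zero.mp (eq_zero_of_two_homogeneous
      (g := fun x : G => q x - p x) (fun x => ?_) ⟨M + B, fun x => ?_⟩ x)
    · have h : q (x ^ 2) = (2 : ℝ) • q x := by
        simpa using hqn x 2
      simp only [hp2, h]
      module
    · have e : q x - p x = (f - p) x - b x := by
        rw [hqb]; simp only [Pi.sub_apply, Pi.add_apply]; abel
      simp only [e]
      exact norm_sub_le_of_le (hM x) (hB x)
  have hbp : b = f - p := by rw [hqb, hqp]; simp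
  rw [hqp, hbp]
end

section
/- Let G be a group, E a real Banach space, and f : G → E a pseudo-Jensen function with constant c (i.e., ‖f(xy) + f(xy⁻¹) − 2f(x)‖ ≤ c for all x, y and f(xⁿ) = n·f(x) for all x and all integers n) such that f(xy) = f(yx) for all x, y ∈ G. Then ‖f(xy) − f(x) − f(y)‖ ≤ c for all x, y ∈ G; in particular f is a pseudoadditive mapping. -/
/-- A function `f : G → E` is quasiadditive if the set
`{f(xy) − f(x) − f(y) : x, y ∈ G}` is bounded. -/
def QuasiAdditive {G : Type*} [Group G] {E : Type*} [NormedAddCommGroup E]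
    [NormedSpace ℝ E] (f : G → E) : Prop :=
  ∃ M : ℝ, ∀ x y : G, ‖f (x * y) - f x - f y‖ ≤ M

/-- A function `f : G → E` is pseudoadditive if it is quasiadditive and
`f(xⁿ) = n·f(x)` for all `x ∈ G` and all integers `n`. -/
def PseudoAdditive {G : Type*} [Group G] {E : Type*} [NormedAddCommGroup E]
    [NormedSpace ℝ E] (f : G → E) : Prop :=
  QuasiAdditive f ∧ ∀ (x : G) (n : ℤ), f (x ^ n) = (n : ℝ) • f x

/-- part 2 of Theorem 2.12 / `xy=yx`.  If `f : G → E` is a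
pseudo-Jensen function with constant `c` and `f(xy) = f(yx)` for all `x, y`,
then `‖f(xy) − f(x) − f(y)‖ ≤ c` for all `x, y`; in particular `f` is a
pseudoadditive mapping. -/
theorem stmt9 {G : Type*} [Group G] {E : Type*} [NormedAddCommGroup E]
    [NormedSpace ℝ E] [CompleteSpace E] (f : G → E) (c : ℝ) (hc : 0 < c)
    (hqj : ∀ x y : G, ‖f (x * y) + f (x * y⁻¹) - (2 : ℝ) • f x‖ ≤ c)
    (hpow : ∀ (x : G) (n : ℤ), f (x ^ n) = (n : ℝ) • f x)
    (hcomm : ∀ x y : G, f (x * y) = f (y * x)) :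
    (∀ x y : G, ‖f (x * y) - f x - f y‖ ≤ c) ∧ PseudoAdditive f := by
  have hodd : ∀ x y : G, f (y * x⁻¹) = -f (x * y⁻¹) := fun x y => by
    have h := hpow (x * y⁻¹) (-1)
    simpa using h
  have hbound : ∀ x y : G, ‖f (x * y) - f x - f y‖ ≤ c := fun x y => by
    have h₂ := hqj y x
    rw [hcomm y x, hodd x y] at h₂
    -- In the sum of the two Jensen differences the terms `± f (x * y⁻¹)` cancel.
    have key : (2 : ℝ) • (f (x * y) - f x - f y) =
        (f (x * y) + f (x * y⁻¹) - (2 : ℝ) • f x) +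
          (f (x * y) + -f (x * y⁻¹) - (2 : ℝ) • f y) := by
      module
    have h := norm_add_le_of_le (hqj x y) h₂
    rw [← key, norm_smul, Real.norm_two] at h
    linarith
  exact ⟨hbound, ⟨c, hbound⟩, hpow⟩
end

section
/- If G is an abelian group and E is a real Banach space, then every pseudo-Jensen function f : G → E is an additive homomorphism, i.e., f(xy) = f(x) + f(y) for all x, y ∈ G. -/
/-- On an abelian group a pseudo-Jensen function satisfies Jensen's equation exactly. -/
theorem PseudoJensen.jensen_eq {G : Type*} [CommGroup G] {E : Type*} [NormedAddCommGroup E]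
    [NormedSpace ℝ E] {f : G → E} (hf : PseudoJensen f) (x y : G) :
    f (x * y) + f (x * y⁻¹) = (2 : ℝ) • f x := by
  obtain ⟨⟨c, -, hc⟩, hpow⟩ := hf
  rw [← sub_eq_zero]
  by_contra hne
  have hpos : 0 < ‖f (x * y) + f (x * y⁻¹) - (2 : ℝ) • f x‖ := norm_pos_iff.mpr hne
  obtain ⟨n, hn⟩ := exists_nat_gt (c / ‖f (x * y) + f (x * y⁻¹) - (2 : ℝ) • f x‖)
  rw [div_lt_iff₀ hpos] at hn
  have h := hc (x ^ (n : ℤ)) (y ^ (n : ℤ))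
  have hscale : f (x ^ (n : ℤ) * y ^ (n : ℤ)) + f (x ^ (n : ℤ) * (y ^ (n : ℤ))⁻¹)
      - (2 : ℝ) • f (x ^ (n : ℤ)) = (n : ℝ) • (f (x * y) + f (x * y⁻¹) - (2 : ℝ) • f x) := by
    rw [← inv_zpow, ← mul_zpow, ← mul_zpow, hpow, hpow, hpow]
    push_cast
    module
  rw [hscale, norm_smul, Real.norm_natCast] at h
  linarith

/-- Corollary 2.13 / `abelian`.  If `G` is abelian and `E` is a
real Banach space, then every pseudo-Jensen function `f : G → E` is an additive
homomorphism. -/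
theorem stmt10 {G : Type*} [CommGroup G] {E : Type*} [NormedAddCommGroup E]
    [NormedSpace ℝ E] [CompleteSpace E] (f : G → E) (hf : PseudoJensen f) :
    ∀ x y : G, f (x * y) = f x + f y := by
  intro x y
  have hxy := hf.jensen_eq x y
  have hyx := hf.jensen_eq y x
  have hodd : f (y * x⁻¹) = -f (x * y⁻¹) := by
    have h := hf.2 (x * y⁻¹) (-1)
    simpa using h
  rw [mul_comm y x, hodd] at hyx
  have h2 : (2 : ℝ) • f (x * y) = (2 : ℝ) • (f x + f y) := by
    rw [smul_add, ← hxy, ← hyx]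
    module
  exact smul_right_injective E (two_ne_zero : (2 : ℝ) ≠ 0) h2
end

section
/- Let G be a group and E a real Banach space. If f : G → E is both a pseudoadditive mapping and a Jensen function (f(xy) + f(xy⁻¹) = 2f(x) for all x, y ∈ G), then f is an additive homomorphism: f(xy) = f(x) + f(y) for all x, y ∈ G. -/
theorem jensen_mul_pow {G : Type*} [Group G] {E : Type*} [NormedAddCommGroup E]
    [NormedSpace ℝ E] (f : G → E)
    (hj : ∀ x y : G, f (x * y) + f (x * y⁻¹) = (2 : ℝ) • f x) (x y : G) (n : ℕ) :
    f (x * y ^ n) = f x + (n : ℝ) • (f (x * y) - f x) := by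
  induction n using Nat.twoStepInduction with
  | zero => simp
  | one => simp
  | more n ih₀ ih₁ =>
    have h := hj (x * y ^ (n + 1)) y
    have e₁ : x * y ^ (n + 1) * y = x * y ^ (n + 2) := by rw [mul_assoc, ← pow_succ]
    have e₂ : x * y ^ (n + 1) * y⁻¹ = x * y ^ n := by rw [pow_succ]; group
    rw [e₁, e₂] at h
    rw [eq_sub_of_add_eq h, ih₀, ih₁]
    push_cast
    module

/-- Remark 3.4 / `rem1a`.  If `f : G → E` is both
pseudoadditive and a Jensen function, then `f` is an additive homomorphism. -/
theorem stmt12 {G : Type*} [Group G] {E : Type*} [NormedAddCommGroup E]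
    [NormedSpace ℝ E] [CompleteSpace E] (f : G → E)
    (hpa : PseudoAdditive f)
    (hj : ∀ x y : G, f (x * y) + f (x * y⁻¹) = (2 : ℝ) • f x) :
    ∀ x y : G, f (x * y) = f x + f y := by
  obtain ⟨⟨M, hM⟩, hpow⟩ := hpa
  intro x y
  have key : ∀ n : ℕ, (n : ℝ) * ‖f (x * y) - f x - f y‖ ≤ M := by
    intro n
    have h := hM x (y ^ n)
    have hp : f (y ^ n) = (n : ℝ) • f y := by simpa using hpow y n
    have e : f (x * y ^ n) - f x - f (y ^ n) = (n : ℝ) • (f (x * y) - f x - f y) := by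
      rw [jensen_mul_pow f hj, hp]
      module
    rwa [e, norm_smul, Real.norm_natCast] at h
  have h0 : f (x * y) - f x - f y = 0 := by
    by_contra hne
    obtain ⟨n, hn⟩ := exists_nat_gt (M / ‖f (x * y) - f x - f y‖)
    rw [div_lt_iff₀ (norm_pos_iff.mpr hne)] at hn
    exact absurd (key n) (not_le.mpr hn)
  rwa [sub_sub, sub_eq_zero] at h0
end

section
/- Let G be a group and let φ : G → ℝ be a pseudocharacter. If there exists a function j : G → ℝ with j(1) = 0 satisfying the Jensen equation j(xy) + j(xy⁻¹) = 2j(x) for all x, y ∈ G such that φ − j is bounded, then φ is an additive character, i.e., φ(xy) = φ(x) + φ(y) for all x, y ∈ G. Consequently, if a group G has a pseudocharacter that is not an additive character, then the Jensen equation is not stable on G. -/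
/-!
Both a pseudocharacter `φ` and a Jensen function `j` with `j 1 = 0` are homogeneous on powers, so
a bounded difference `φ - j` vanishes identically, and `φ` itself satisfies the Jensen equation.
Adding the Jensen equations for `(x, y)` and `(y, x)`, where `φ (y * x⁻¹) = -φ (x * y⁻¹)`, gives
`φ (x * y) + φ (y * x) = 2 * φ x + 2 * φ y`. A pseudocharacter satisfies `φ (x * y) = φ (y * x)`
(`Pseudocharacter.map_mul_comm`), so `φ` is additive. For the second claim, a pseudocharacter has
bounded Jensen difference, so stability would put it at bounded distance from such a `j`.
-/

/-- A pseudocharacter of `G` is a real-valued function `φ` such that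
`{φ(xy) − φ(x) − φ(y) : x, y ∈ G}` is bounded and `φ(xⁿ) = n·φ(x)` for all
`x ∈ G` and all integers `n`. -/
def Pseudocharacter {G : Type*} [Group G] (φ : G → ℝ) : Prop :=
  (∃ M : ℝ, ∀ x y : G, |φ (x * y) - φ x - φ y| ≤ M) ∧
    ∀ (x : G) (n : ℤ), φ (x ^ n) = (n : ℝ) * φ x

/-- The Jensen equation is stable on `G` (for real-valued functions) if every
`f : G → ℝ` with bounded Jensen difference is within bounded distance of a
Jensen function `j` with `j(1) = 0`. -/
def JensenStableR (G : Type*) [Group G] : Prop :=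
  ∀ f : G → ℝ,
    (∃ c > (0 : ℝ), ∀ x y : G, |f (x * y) + f (x * y⁻¹) - 2 * f x| ≤ c) →
    ∃ j : G → ℝ, j 1 = 0 ∧ (∀ x y : G, j (x * y) + j (x * y⁻¹) = 2 * j x) ∧
      ∃ M : ℝ, ∀ x : G, |f x - j x| ≤ M

theorem eq_zero_of_forall_abs_nat_mul_le {a C : ℝ} (h : ∀ n : ℕ, |(n : ℝ) * a| ≤ C) : a = 0 := by
  by_contra ha
  have hpos : 0 < |a| := abs_pos.mpr ha
  obtain ⟨n, hn⟩ := exists_nat_gt (C / |a|)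
  have h1 := h n
  rw [abs_mul, Nat.abs_cast] at h1
  rw [div_lt_iff₀ hpos] at hn
  linarith

theorem Pseudocharacter.map_npow {G : Type*} [Group G] {φ : G → ℝ} (hφ : Pseudocharacter φ)
    (x : G) (n : ℕ) : φ (x ^ n) = n * φ x := by
  simpa using hφ.2 x n

theorem Pseudocharacter.map_inv {G : Type*} [Group G] {φ : G → ℝ} (hφ : Pseudocharacter φ)
    (x : G) : φ x⁻¹ = -φ x := by
  simpa using hφ.2 x (-1)

/-- Since `(x * y) ^ (n + 1) = x * (y * x) ^ n * y`, the quantity `n * (φ (x * y) - φ (y * x))`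
is bounded independently of `n`. -/
theorem Pseudocharacter.map_mul_comm {G : Type*} [Group G] {φ : G → ℝ} (hφ : Pseudocharacter φ)
    (x y : G) : φ (x * y) = φ (y * x) := by
  obtain ⟨M, hM⟩ := hφ.1
  rw [← sub_eq_zero]
  refine eq_zero_of_forall_abs_nat_mul_le (C := 3 * M) fun n => ?_
  have hpow : (x * y) ^ (n + 1) = x * (y * x) ^ n * y := by
    induction n with
    | zero => simp
    | succ k ih => rw [pow_succ, ih, pow_succ]; group
  have h1 := abs_le.mp (hM (x * (y * x) ^ n) y)
  have h2 := abs_le.mp (hM x ((y * x) ^ n))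
  have h3 := abs_le.mp (hM x y)
  rw [← hpow, hφ.map_npow] at h1
  rw [hφ.map_npow] at h2
  push_cast at h1
  rw [abs_le]
  constructor <;> linarith [h1.1, h1.2, h2.1, h2.2, h3.1, h3.2]

/-- The Jensen equation at `(x ^ (n + 1), x)` is a second-order linear recurrence in `n`. -/
theorem jensen_map_npow {G : Type*} [Group G] {j : G → ℝ} (h1 : j 1 = 0)
    (hj : ∀ x y : G, j (x * y) + j (x * y⁻¹) = 2 * j x) (x : G) (n : ℕ) :
    j (x ^ n) = n * j x := by
  induction n using Nat.twoStepInduction with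
  | zero => simp [h1]
  | one => simp
  | more n ih0 ih1 =>
    have h := hj (x ^ (n + 1)) x
    rw [← pow_succ, pow_succ x n, mul_inv_cancel_right, ← pow_succ, ih0, ih1] at h
    push_cast at h ⊢
    linarith

theorem Pseudocharacter.map_mul_of_near_jensen {G : Type*} [Group G] {φ j : G → ℝ}
    (hφ : Pseudocharacter φ) (h1 : j 1 = 0)
    (hj : ∀ x y : G, j (x * y) + j (x * y⁻¹) = 2 * j x)
    (hb : ∃ M : ℝ, ∀ x : G, |φ x - j x| ≤ M) (x y : G) : φ (x * y) = φ x + φ y := by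
  obtain ⟨M, hM⟩ := hb
  have heq : φ = j := by
    funext z
    rw [← sub_eq_zero]
    refine eq_zero_of_forall_abs_nat_mul_le (C := M) fun n => ?_
    rw [mul_sub, ← hφ.map_npow, ← jensen_map_npow h1 hj]
    exact hM _
  subst heq
  have hxy := hj x y
  have hyx := hj y x
  have hinv := hφ.map_inv (x * y⁻¹)
  rw [mul_inv_rev, inv_inv] at hinv
  linarith [hφ.map_mul_comm x y]

/-- Remark 3.5 / `rem1b`.  If `φ` is a pseudocharacter of `G`
and there is a Jensen function `j` with `j(1) = 0` such that `φ − j` is bounded,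
then `φ` is an additive character.  Consequently, if `G` has a pseudocharacter
that is not an additive character, then the Jensen equation is not stable on `G`. -/
theorem stmt13 (G : Type*) [Group G] :
    (∀ φ j : G → ℝ, Pseudocharacter φ → j 1 = 0 →
      (∀ x y : G, j (x * y) + j (x * y⁻¹) = 2 * j x) →
      (∃ M : ℝ, ∀ x : G, |φ x - j x| ≤ M) →
      ∀ x y : G, φ (x * y) = φ x + φ y) ∧
    ((∃ φ : G → ℝ, Pseudocharacter φ ∧ ¬ (∀ x y : G, φ (x * y) = φ x + φ y)) →
      ¬ JensenStableR G) := by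
  refine ⟨fun φ j hφ h1 hj hb => hφ.map_mul_of_near_jensen h1 hj hb, ?_⟩
  rintro ⟨φ, hφ, hnot⟩ hst
  obtain ⟨M, hM⟩ := hφ.1
  have hM0 : 0 ≤ M := (abs_nonneg _).trans (hM 1 1)
  obtain ⟨j, h1, hj, hb⟩ := hst φ ⟨2 * M + 1, by linarith, fun x y => by
    have ha := abs_le.mp (hM x y)
    have hc := abs_le.mp (hM x y⁻¹)
    rw [hφ.map_inv] at hc
    rw [abs_le]
    constructor <;> linarith [ha.1, ha.2, hc.1, hc.2]⟩
  exact hnot (hφ.map_mul_of_near_jensen h1 hj hb)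
end

section
/- Let H be the group of 3×3 upper unitriangular matrices over ℤ. Define φ : H → ℝ by φ(g) = m·n − 2k, where g is the matrix with (1,2)-entry n, (2,3)-entry m, and (1,3)-entry k. Then φ(1) = 0 and φ satisfies the Jensen functional equation: φ(xy) + φ(xy⁻¹) = 2φ(x) for all x, y ∈ H. -/
/-! Writing `n`, `m`, `k` for the entries above the diagonal, `n` and `m` are homomorphisms to `ℤ`
and `k (x * y) = k x + n x * m y + k y`. Hence `φ` is additive up to an alternating bilinear form
(`heisPhi_mul`): `φ (x * y) = φ x + φ y + (m x * n y - n x * m y)`. The form vanishes on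
`(y, y⁻¹)`, so `φ` is odd, and since the form is odd in its second argument too, everything
except `2 * φ x` cancels in `φ (x * y) + φ (x * y⁻¹)`. -/

open Matrix

/-- The Heisenberg group `UT(3, ℤ)` of 3×3 upper unitriangular integer matrices,
as a subgroup of `SL(3, ℤ)`. -/
def HeisenbergUT3 : Subgroup (Matrix.SpecialLinearGroup (Fin 3) ℤ) where
  carrier := {M | (M : Matrix (Fin 3) (Fin 3) ℤ) 1 0 = 0 ∧
    (M : Matrix (Fin 3) (Fin 3) ℤ) 2 0 = 0 ∧
    (M : Matrix (Fin 3) (Fin 3) ℤ) 2 1 = 0 ∧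
    (M : Matrix (Fin 3) (Fin 3) ℤ) 0 0 = 1 ∧
    (M : Matrix (Fin 3) (Fin 3) ℤ) 1 1 = 1 ∧
    (M : Matrix (Fin 3) (Fin 3) ℤ) 2 2 = 1}
  one_mem' := by
    refine ⟨?_, ?_, ?_, ?_, ?_, ?_⟩ <;>
      simp [Matrix.SpecialLinearGroup.coe_one, Matrix.one_apply]
  mul_mem' := by
    rintro a b ⟨ha10, ha20, ha21, ha00, ha11, ha22⟩ ⟨hb10, hb20, hb21, hb00, hb11, hb22⟩
    refine ⟨?_, ?_, ?_, ?_, ?_, ?_⟩ <;>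
      simp [Matrix.SpecialLinearGroup.coe_mul, Matrix.mul_apply, Fin.sum_univ_three,
        ha10, ha20, ha21, ha00, ha11, ha22, hb10, hb20, hb21, hb00, hb11, hb22]
  inv_mem' := by
    rintro a ⟨h10, h20, h21, h00, h11, h22⟩
    have hmul : (a : Matrix (Fin 3) (Fin 3) ℤ) * ((a⁻¹ : Matrix.SpecialLinearGroup (Fin 3) ℤ) : Matrix (Fin 3) (Fin 3) ℤ) = 1 := by
      rw [← Matrix.SpecialLinearGroup.coe_mul, mul_inv_cancel,
        Matrix.SpecialLinearGroup.coe_one]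
    set N := ((a⁻¹ : Matrix.SpecialLinearGroup (Fin 3) ℤ) : Matrix (Fin 3) (Fin 3) ℤ) with hN
    have key : ∀ i j, ∑ k, (a : Matrix (Fin 3) (Fin 3) ℤ) i k * N k j
        = (1 : Matrix (Fin 3) (Fin 3) ℤ) i j := by
      intro i j; rw [← Matrix.mul_apply, hmul]
    have e20 := key 2 0
    have e10 := key 1 0
    have e21 := key 2 1
    have e22 := key 2 2
    have e11 := key 1 1
    have e00 := key 0 0
    simp [Fin.sum_univ_three, h10, h20, h21, h00, h11, h22, Matrix.one_apply] at e20 e10 e21 e22 e11 e00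
    rw [e20] at e10
    rw [e21] at e11
    simp only [mul_zero, add_zero] at e10 e11
    rw [e10, e20] at e00
    simp only [mul_zero, add_zero] at e00
    exact ⟨e10, e20, e21, e00, e11, e22⟩

/-- The matrix `c = I + E₁₃` as an element of the Heisenberg group. -/
def heisC : HeisenbergUT3 :=
  ⟨⟨!![1, 0, 1; 0, 1, 0; 0, 0, 1], by decide⟩,
    by refine ⟨?_, ?_, ?_, ?_, ?_, ?_⟩ <;> decide⟩

/-- The matrix `a = I + E₂₃` as an element of the Heisenberg group. -/
def heisA : HeisenbergUT3 :=
  ⟨⟨!![1, 0, 0; 0, 1, 1; 0, 0, 1], by decide⟩,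
    by refine ⟨?_, ?_, ?_, ?_, ?_, ?_⟩ <;> decide⟩

/-- The matrix `b = I + E₁₂` as an element of the Heisenberg group. -/
def heisB : HeisenbergUT3 :=
  ⟨⟨!![1, 1, 0; 0, 1, 0; 0, 0, 1], by decide⟩,
    by refine ⟨?_, ?_, ?_, ?_, ?_, ?_⟩ <;> decide⟩

/-- The function `φ(g) = m·n − 2k` on the Heisenberg group, where the element
`g` has `(1,2)`-entry `n`, `(2,3)`-entry `m` and `(1,3)`-entry `k`
(1-indexed; in Lean's 0-indexed notation the entries `(0,1)`, `(1,2)` and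
`(0,2)` respectively). -/
noncomputable def heisPhi (g : HeisenbergUT3) : ℝ :=
  let M : Matrix (Fin 3) (Fin 3) ℤ :=
    ((g : Matrix.SpecialLinearGroup (Fin 3) ℤ) : Matrix (Fin 3) (Fin 3) ℤ)
  ((M 1 2 * M 0 1 - 2 * M 0 2 : ℤ) : ℝ)

lemma heis_mul_apply_zero_one (x y : HeisenbergUT3) :
    (x * y).1.1 0 1 = x.1.1 0 1 + y.1.1 0 1 := by
  obtain ⟨x, -, -, -, hx00, -, -⟩ := x
  obtain ⟨y, -, -, hy21, -, hy11, -⟩ := y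
  simp [Matrix.mul_apply, Fin.sum_univ_three, hx00, hy21, hy11]
  ring

lemma heis_mul_apply_one_two (x y : HeisenbergUT3) :
    (x * y).1.1 1 2 = x.1.1 1 2 + y.1.1 1 2 := by
  obtain ⟨x, hx10, -, -, -, hx11, -⟩ := x
  obtain ⟨y, -, -, -, -, -, hy22⟩ := y
  simp [Matrix.mul_apply, Fin.sum_univ_three, hx10, hx11, hy22]
  ring

lemma heis_mul_apply_zero_two (x y : HeisenbergUT3) :
    (x * y).1.1 0 2 = x.1.1 0 2 + x.1.1 0 1 * y.1.1 1 2 + y.1.1 0 2 := by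
  obtain ⟨x, -, -, -, hx00, -, -⟩ := x
  obtain ⟨y, -, -, -, -, -, hy22⟩ := y
  simp [Matrix.mul_apply, Fin.sum_univ_three, hx00, hy22]
  ring

lemma heis_inv_apply_zero_one (y : HeisenbergUT3) : y⁻¹.1.1 0 1 = -y.1.1 0 1 := by
  have h := heis_mul_apply_zero_one y y⁻¹
  rw [mul_inv_cancel] at h
  have h1 : (1 : HeisenbergUT3).1.1 0 1 = 0 := rfl
  linarith

lemma heis_inv_apply_one_two (y : HeisenbergUT3) : y⁻¹.1.1 1 2 = -y.1.1 1 2 := by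
  have h := heis_mul_apply_one_two y y⁻¹
  rw [mul_inv_cancel] at h
  have h1 : (1 : HeisenbergUT3).1.1 1 2 = 0 := rfl
  linarith

lemma heisPhi_one : heisPhi 1 = 0 := by
  simp [heisPhi]

/-- `heisPhi` is additive up to the alternating form `m x * n y - n x * m y`. -/
lemma heisPhi_mul (x y : HeisenbergUT3) :
    heisPhi (x * y) = heisPhi x + heisPhi y +
      ((x.1.1 1 2 * y.1.1 0 1 - x.1.1 0 1 * y.1.1 1 2 : ℤ) : ℝ) := by
  simp only [heisPhi]
  rw [heis_mul_apply_zero_one, heis_mul_apply_one_two, heis_mul_apply_zero_two]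
  push_cast
  ring

lemma heisPhi_inv (y : HeisenbergUT3) : heisPhi y⁻¹ = -heisPhi y := by
  have h := heisPhi_mul y y⁻¹
  rw [mul_inv_cancel, heisPhi_one, heis_inv_apply_zero_one, heis_inv_apply_one_two] at h
  push_cast at h
  linarith

/-- Lemma 3.9 / `metab-3`.  On the Heisenberg group
`H = UT(3, ℤ)`, the function `φ(g) = m·n − 2k` (with `g` having `(1,2)`-entry
`n`, `(2,3)`-entry `m`, `(1,3)`-entry `k`) satisfies `φ(1) = 0` and the Jensen
functional equation `φ(xy) + φ(xy⁻¹) = 2φ(x)`. -/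
theorem stmt16 :
    heisPhi 1 = 0 ∧
    ∀ x y : HeisenbergUT3, heisPhi (x * y) + heisPhi (x * y⁻¹) = 2 * heisPhi x := by
  refine ⟨heisPhi_one, fun x y => ?_⟩
  rw [heisPhi_mul, heisPhi_mul, heisPhi_inv, heis_inv_apply_zero_one, heis_inv_apply_one_two]
  push_cast
  ring
end

section
/- Let G be a group, E a real Banach space, f : G → E a pseudo-Jensen function, and b ∈ G an element of order two (b² = 1, b ≠ 1). Then f is invariant under conjugation by b: f(b⁻¹xb) = f(x) for all x ∈ G. -/
/-- Lemma 3.13 / `emb-1`.  If `f : G → E` is pseudo-Jensen and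
`b ∈ G` has order two, then `f` is invariant under conjugation by `b`:
`f(b⁻¹xb) = f(x)` for all `x ∈ G`. -/
theorem stmt18 {G : Type*} [Group G] {E : Type*} [NormedAddCommGroup E]
    [NormedSpace ℝ E] [CompleteSpace E] (f : G → E) (hf : PseudoJensen f)
    (b : G) (hb2 : b ^ 2 = 1) (hb1 : b ≠ 1) :
    ∀ x : G, f (b⁻¹ * x * b) = f x := by
  obtain ⟨⟨c, -, hc⟩, hpow⟩ := hf
  have hbinv : b⁻¹ = b := inv_eq_of_mul_eq_one_left (by rw [← sq, hb2])
  have hone : f 1 = 0 := by simpa using hpow 1 0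
  have hb : (2 : ℝ) • f b = 0 := by
    have h := hpow b 2
    rw [zpow_ofNat, hb2, hone] at h
    exact_mod_cast h.symm
  have hinv : ∀ x, f x⁻¹ = -f x := fun x => by simpa using hpow x (-1)
  have hbound : ∀ x, ‖f (b⁻¹ * x * b) - f x‖ ≤ c := fun x => by
    -- With `y = x * b`, the point `b * y⁻¹` collapses to `b * b⁻¹ * x⁻¹ = x⁻¹`.
    have h := hc b (x * b)
    have hy : b * (x * b)⁻¹ = x⁻¹ := by simp
    rw [hy, hinv, hb, sub_zero, ← sub_eq_add_neg, ← mul_assoc] at h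
    rwa [hbinv]
  intro x
  have hn : ∀ n : ℕ, (n : ℝ) * ‖f (b⁻¹ * x * b) - f x‖ ≤ c := fun n => by
    have hconj : b⁻¹ * x ^ (n : ℤ) * b = (b⁻¹ * x * b) ^ (n : ℤ) := by
      simpa using (conj_zpow (i := (n : ℤ)) (a := b⁻¹) (b := x)).symm
    have h := hbound (x ^ (n : ℤ))
    rw [hconj, hpow, hpow, ← smul_sub, norm_smul] at h
    simpa using h
  by_contra hne
  have hpos : 0 < ‖f (b⁻¹ * x * b) - f x‖ := norm_pos_iff.mpr (sub_ne_zero.mpr hne)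
  obtain ⟨n, hlt⟩ := exists_nat_gt (c / ‖f (b⁻¹ * x * b) - f x‖)
  exact absurd (hn n) (not_le.mpr ((div_lt_iff₀ hpos).mp hlt))
end
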